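/- arXiv:1811.12657 — 3 statements merged into one kernel-verified Lean document; each statement's English description precedes it below -/
import Mathlib

section
/- For the unweighted single-machine problem with time-of-use tariffs, there exists a schedule S* attaining the minimum of cost(S) = ∑_j C_j(S) + E(S) over all schedules such that S* processes jobs in Shortest Processing Time First order: for all jobs j and k, if p_j < p_k then every time slot assigned to j by S* is strictly smaller than every time slot assigned to k by S*. -/
open Finset

/-- A schedule: assigns to each unit time slot `[t,t+1)` at most one job;
each job `j` receives exactly `p j` slots, and no slot at or beyond the horizon `D` is used. -/
structure Schedule (n : ℕ) (p : Fin n → ℕ) (D : ℕ) where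
  assign : ℕ → Option (Fin n)
  card_slots : ∀ j : Fin n,
    ((Finset.range D).filter (fun t => assign t = some j)).card = p j
  beyond : ∀ t, D ≤ t → assign t = none

variable {n D : ℕ} {p : Fin n → ℕ}

/-- The set of time slots assigned to job `j`. -/
def jobSlots (S : Schedule n p D) (j : Fin n) : Finset ℕ :=
  (Finset.range D).filter (fun t => S.assign t = some j)

/-- The start time of job `j`: the least `t` with `S.assign t = some j`. -/
noncomputable def startTime (S : Schedule n p D) (j : Fin n) : ℕ :=
  sInf {t | S.assign t = some j}

/-- The completion time of job `j`: one plus the greatest `t` with `S.assign t = some j`. -/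
def completion (S : Schedule n p D) (j : Fin n) : ℕ :=
  (jobSlots S j).sup id + 1

/-- The utilization cost of a schedule: total tariff of all utilized slots. -/
def ucost (e : ℕ → ℚ) (S : Schedule n p D) : ℚ :=
  ∑ t ∈ (Finset.range D).filter (fun t => S.assign t ≠ none), e t

/-!
Among the schedules of minimum cost, take one that maximizes the potential `∑ j, p j * ∑ t, t`,
where `t` runs over the slots of `j`. Suppose `p j < p k` while some slot of `k` precedes a slot
of `j`. Give the first `p j` of the slots used by `j` and `k` to `j` and the remaining ones to
`k`. The new completion time of `j` is at most each of the two old ones, because each job occupied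
at least `p j` of these slots, and that of `k` is at most their maximum; the utilized slots are
the same, so the schedule is still optimal. But slots have moved from the factor `p j` to the
larger factor `p k` in the potential, which has strictly increased: a contradiction.
-/

lemma sum_univ_eq_add_add_sum_compl_pair {ι M : Type*} [Fintype ι] [DecidableEq ι]
    [AddCommMonoid M] {j k : ι} (hjk : j ≠ k) (f : ι → M) :
    ∑ i, f i = f j + f k + ∑ i ∈ {j, k}ᶜ, f i := by
  rw [← sum_pair hjk, sum_add_sum_compl]

lemma biUnion_univ_eq_union_union_biUnion_compl_pair {ι α : Type*} [Fintype ι] [DecidableEq ι]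
    [DecidableEq α] (s : ι → Finset α) (j k : ι) :
    univ.biUnion s = s j ∪ s k ∪ ({j, k}ᶜ : Finset ι).biUnion s := by
  rw [← union_compl {j, k}, union_biUnion, biUnion_insert, singleton_biUnion]

lemma add_le_add_of_le_min_of_le_max {α M : Type*} [LinearOrder α] [AddCommMonoid M] [Preorder M]
    [IsOrderedAddMonoid M] {g : α → M} (hg : Monotone g) {a b c d : α}
    (hc : c ≤ min a b) (hd : d ≤ max a b) : g c + g d ≤ g a + g b := by
  wlog hab : a ≤ b generalizing a b
  · rw [add_comm (g a)]
    exact this (min_comm a b ▸ hc) (max_comm a b ▸ hd) (le_of_not_ge hab)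
  exact add_le_add (hg (min_eq_left hab ▸ hc)) (hg (max_eq_right hab ▸ hd))

lemma sum_lt_sum_of_card_eq_of_forall_lt {ι κ M : Type*} [AddCommMonoid M] [PartialOrder M]
    [IsOrderedCancelAddMonoid M] {s : Finset ι} {t : Finset κ} {f : ι → M} {g : κ → M}
    (hs : s.Nonempty) (hcard : #s = #t) (hfg : ∀ x ∈ s, ∀ y ∈ t, f x < g y) :
    ∑ x ∈ s, f x < ∑ y ∈ t, g y := by
  let σ : s ≃ t := equivOfCardEq hcard
  calc ∑ x ∈ s, f x = ∑ x : s, f x := (sum_coe_sort s f).symm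
    _ < ∑ x : s, g (σ x) :=
      sum_lt_sum_of_nonempty (univ_nonempty_iff.2 hs.to_subtype) fun x _ =>
        hfg x x.2 (σ x) (σ x).2
    _ = ∑ y : t, g y := σ.sum_comp fun y : t => g y
    _ = ∑ y ∈ t, g y := sum_coe_sort t g

section Precedence

variable {α : Type*} [LinearOrder α]

lemma exists_union_eq_card_eq_forall_lt {U : Finset α} {m : ℕ} (hm : m ≤ #U) :
    ∃ A B, A ∪ B = U ∧ #A = m ∧ ∀ x ∈ A, ∀ y ∈ B, x < y := by
  induction U using Finset.induction_on_max with
  | empty => exact ⟨∅, ∅, by simp_all⟩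
  | insert a s ha ih =>
    have hcard : #(insert a s) = #s + 1 := card_insert_of_notMem fun h => (ha a h).false
    rcases hm.eq_or_lt with rfl | hlt
    · exact ⟨insert a s, ∅, by simp⟩
    · obtain ⟨A, B, rfl, hA, hAB⟩ := ih (by omega)
      refine ⟨A, insert a B, union_insert a A B, hA, fun x hx => ?_⟩
      simpa only [forall_mem_insert] using ⟨ha x (mem_union_left B hx), hAB x hx⟩

lemma sup_id_le_sup_id_of_forall_lt [OrderBot α] {A B X : Finset α}
    (hAB : ∀ x ∈ A, ∀ y ∈ B, x < y) (hX : X ⊆ A ∪ B) (hcard : #A ≤ #X) :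
    A.sup id ≤ X.sup id := by
  refine Finset.sup_le fun a ha => ?_
  suffices h : ∃ x ∈ X, a ≤ x by
    obtain ⟨x, hx, hax⟩ := h
    exact le_sup_of_le hx hax
  by_contra! hlt
  have hXA : X ⊆ A.erase a := fun x hx => by
    have hxa : x < a := hlt x hx
    exact mem_erase.2 ⟨hxa.ne, (mem_union.1 (hX hx)).resolve_right fun hB =>
      hxa.not_gt (hAB a ha x hB)⟩
  exact (card_le_card hXA).not_gt ((card_erase_lt_of_mem ha).trans_le hcard)

lemma sum_lt_sum_of_subset_union_of_forall_lt {M : Type*} [AddCommMonoid M] [PartialOrder M]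
    [IsOrderedCancelAddMonoid M] {f : α → M} (hf : StrictMono f) {A B X : Finset α}
    (hAB : ∀ x ∈ A, ∀ y ∈ B, x < y) (hX : X ⊆ A ∪ B) (hcard : #A = #X) (hne : A ≠ X) :
    ∑ x ∈ A, f x < ∑ x ∈ X, f x := by
  have hdiff : (A \ X).Nonempty :=
    sdiff_nonempty.2 fun hAX => hne (eq_of_subset_of_card_le hAX hcard.ge)
  refine sum_sdiff_lt_sum_sdiff.1 (sum_lt_sum_of_card_eq_of_forall_lt hdiff
    (card_sdiff_comm hcard) fun x hx y hy => hf ?_)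
  rw [mem_sdiff] at hx hy
  exact hAB x hx.1 y ((mem_union.1 (hX hy.1)).resolve_left hy.2)

end Precedence

lemma mem_jobSlots {S : Schedule n p D} {j : Fin n} {t : ℕ} :
    t ∈ jobSlots S j ↔ S.assign t = some j := by
  simp only [jobSlots, mem_filter, mem_range, and_iff_right_iff_imp]
  intro h
  by_contra! hD
  simp [S.beyond t hD] at h

lemma card_jobSlots (S : Schedule n p D) (j : Fin n) : #(jobSlots S j) = p j :=
  S.card_slots j

lemma jobSlots_subset_range (S : Schedule n p D) (j : Fin n) : jobSlots S j ⊆ range D :=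
  filter_subset _ _

lemma pairwise_disjoint_jobSlots (S : Schedule n p D) :
    Pairwise (Function.onFun Disjoint (jobSlots S)) := fun j k hjk =>
  disjoint_left.2 fun t hj hk => hjk <| by
    simpa only [mem_jobSlots.1 hj, Option.some.injEq] using mem_jobSlots.1 hk

lemma exists_schedule_jobSlots_eq {s : Fin n → Finset ℕ}
    (hs : Pairwise (Function.onFun Disjoint s)) (hcard : ∀ j, #(s j) = p j)
    (hD : ∀ j, s j ⊆ range D) :
    ∃ S : Schedule n p D, jobSlots S = s := by
  let a : ℕ → Option (Fin n) := fun t => if h : ∃ j, t ∈ s j then some h.choose else none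
  have ha (t : ℕ) (j : Fin n) : a t = some j ↔ t ∈ s j := by
    have huniq (i : Fin n) (hi : t ∈ s i) (hj : t ∈ s j) : i = j :=
      hs.eq (not_disjoint_iff.2 ⟨t, hi, hj⟩)
    constructor
    · intro h
      obtain ⟨hex, hchoose⟩ := Option.dite_none_right_eq_some.1 h
      exact Option.some.inj hchoose ▸ hex.choose_spec
    · intro hj
      have hex : ∃ i, t ∈ s i := ⟨j, hj⟩
      exact (dif_pos hex).trans (congrArg some (huniq _ hex.choose_spec hj))
  have hslots (j : Fin n) : (range D).filter (fun t => a t = some j) = s j := by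
    simpa only [ha, filter_mem_eq_inter, inter_eq_right] using hD j
  refine ⟨⟨a, fun j => by rw [hslots, hcard], fun t ht => dif_neg ?_⟩, funext hslots⟩
  rintro ⟨j, hj⟩
  exact (mem_range.1 (hD j hj)).not_ge ht

lemma nonempty_schedule (hD : ∑ j, p j ≤ D) : Nonempty (Schedule n p D) := by
  let slot : (Σ j, Fin (p j)) ↪ ℕ := finSigmaFinEquiv.toEmbedding.trans Fin.valEmbedding
  have hslot (x : Σ j, Fin (p j)) : slot x < D := (finSigmaFinEquiv x).2.trans_le hD
  obtain ⟨S, -⟩ := exists_schedule_jobSlots_eq (p := p) (D := D)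
    (s := fun j => univ.map ((Function.Embedding.sigmaMk j).trans slot))
    (fun j k hjk => disjoint_left.2 <| by
      simp only [mem_map, mem_univ, true_and, Function.Embedding.trans_apply]
      rintro _ ⟨x, rfl⟩ ⟨y, hxy⟩
      exact hjk (congrArg Sigma.fst (slot.injective hxy)).symm)
    (fun j => by simp)
    (fun j => map_subset_iff_subset_preimage.2 fun x _ => by simpa using hslot ⟨j, x⟩)
  exact ⟨S⟩

instance finite_schedule : Finite (Schedule n p D) := by
  refine Finite.of_injective (fun (S : Schedule n p D) (t : Fin D) => S.assign t) ?_
  rintro ⟨a, _, ha⟩ ⟨b, _, hb⟩ hab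
  obtain rfl : a = b := by
    funext t
    rcases lt_or_ge t D with ht | ht
    · exact congrFun hab ⟨t, ht⟩
    · rw [ha t ht, hb t ht]
  rfl

/-- The set of utilized slots of a schedule. -/
def utilizedSlots (S : Schedule n p D) : Finset ℕ :=
  (range D).filter fun t => S.assign t ≠ none

lemma utilizedSlots_eq_biUnion (S : Schedule n p D) :
    utilizedSlots S = univ.biUnion (jobSlots S) := by
  ext t
  simp only [utilizedSlots, jobSlots, mem_filter, mem_biUnion, mem_univ, true_and,
    Option.ne_none_iff_exists', exists_and_left]

/-- The objective function: a penalty `g` on each completion time, plus a charge `c` for the set of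
utilized slots. The unweighted total cost has the cast to `ℚ` for `g` and the sum of the tariffs
for `c`. -/
def totalCost {M : Type*} [AddCommMonoid M] (g : ℕ → M) (c : Finset ℕ → M)
    (S : Schedule n p D) : M :=
  ∑ j, g (completion S j) + c (utilizedSlots S)

/-- Shortest Processing Time First order: every slot of a job precedes every slot of each strictly
longer job. -/
def IsSPT (S : Schedule n p D) : Prop :=
  ∀ j k : Fin n, p j < p k → ∀ t t', S.assign t = some j → S.assign t' = some k → t < t'

/-- The potential that breaks ties between optimal schedules: the total of all slots, each weighted
by the processing time of its job. It is larger when longer jobs come later. -/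
def sptPotential (S : Schedule n p D) : ℕ :=
  ∑ j, p j * ∑ t ∈ jobSlots S j, t

/-- `S'` arises from `S` by an exchange of `j` and `k`: the slots that the two jobs use in `S` are
redistributed between them so that all of `j` precedes all of `k`, and other jobs stay in place. -/
structure IsExchange (S S' : Schedule n p D) (j k : Fin n) : Prop where
  union_eq : jobSlots S' j ∪ jobSlots S' k = jobSlots S j ∪ jobSlots S k
  lt : ∀ x ∈ jobSlots S' j, ∀ y ∈ jobSlots S' k, x < y
  jobSlots_eq : ∀ i ∈ ({j, k}ᶜ : Finset (Fin n)), jobSlots S' i = jobSlots S i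

lemma exists_isExchange (S : Schedule n p D) {j k : Fin n} (hjk : j ≠ k) :
    ∃ S', IsExchange S S' j k := by
  have hdisj := pairwise_disjoint_jobSlots S
  have hU : #(jobSlots S j ∪ jobSlots S k) = p j + p k := by
    rw [card_union_of_disjoint (hdisj hjk), card_jobSlots, card_jobSlots]
  obtain ⟨A, B, hAB, hA, hlt⟩ :=
    exists_union_eq_card_eq_forall_lt (hU.symm ▸ Nat.le_add_right (p j) (p k))
  have hAB_disj : Disjoint A B := disjoint_left.2 fun x hx hy => (hlt x hx x hy).false
  have hB : #B = p k := by
    rw [← hAB, card_union_of_disjoint hAB_disj] at hU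
    omega
  let s : Fin n → Finset ℕ := fun i => if i = j then A else if i = k then B else jobSlots S i
  have hmem (x : ℕ) : x ∈ A ∨ x ∈ B ↔ S.assign x = some j ∨ S.assign x = some k := by
    simp only [← mem_union, hAB, ← mem_jobSlots]
  have hs : Pairwise (Function.onFun Disjoint s) := fun i l hil =>
    disjoint_left.2 fun x hi hl => by grind [mem_jobSlots, disjoint_left]
  have hcard (i : Fin n) : #(s i) = p i := by grind [card_jobSlots]
  have hrange (i : Fin n) : s i ⊆ range D := fun x hx => by
    grind [mem_jobSlots, jobSlots_subset_range]
  obtain ⟨S', hS'⟩ := exists_schedule_jobSlots_eq hs hcard hrange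
  have hj : jobSlots S' j = A := by simp [hS', s]
  have hk : jobSlots S' k = B := by simp [hS', s, hjk.symm]
  exact ⟨S', by rw [hj, hk, hAB], by rwa [hj, hk], by simp_all [s]⟩

namespace IsExchange

variable {S S' : Schedule n p D} {j k : Fin n}

lemma utilizedSlots_eq (h : IsExchange S S' j k) : utilizedSlots S' = utilizedSlots S := by
  simp only [utilizedSlots_eq_biUnion, biUnion_univ_eq_union_union_biUnion_compl_pair _ j k]
  rw [h.union_eq, biUnion_congr rfl h.jobSlots_eq]

lemma completion_left_le (h : IsExchange S S' j k) (hjk : p j ≤ p k) :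
    completion S' j ≤ min (completion S j) (completion S k) := by
  have hle {i : Fin n} (hi : p j ≤ p i) (hsub : jobSlots S i ⊆ jobSlots S j ∪ jobSlots S k) :
      completion S' j ≤ completion S i :=
    Nat.succ_le_succ <| sup_id_le_sup_id_of_forall_lt h.lt (h.union_eq ▸ hsub) <| by
      rwa [card_jobSlots, card_jobSlots]
  exact le_min (hle le_rfl subset_union_left) (hle hjk subset_union_right)

lemma completion_right_le (h : IsExchange S S' j k) :
    completion S' k ≤ max (completion S j) (completion S k) := by
  unfold completion
  rw [max_add_add_right, ← sup_union, ← h.union_eq]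
  exact Nat.succ_le_succ (sup_mono subset_union_right)

lemma totalCost_le {M : Type*} [AddCommMonoid M] [Preorder M] [IsOrderedAddMonoid M]
    (h : IsExchange S S' j k) (hjk : j ≠ k) (hp : p j ≤ p k) {g : ℕ → M} (hg : Monotone g)
    (c : Finset ℕ → M) : totalCost g c S' ≤ totalCost g c S := by
  have hother : ∑ i ∈ {j, k}ᶜ, g (completion S' i) = ∑ i ∈ {j, k}ᶜ, g (completion S i) :=
    sum_congr rfl fun i hi => by rw [completion, h.jobSlots_eq i hi, completion]
  unfold totalCost
  rw [h.utilizedSlots_eq, sum_univ_eq_add_add_sum_compl_pair hjk, hother,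
    sum_univ_eq_add_add_sum_compl_pair hjk fun i => g (completion S i)]
  gcongr ?_ + _ + _
  exact add_le_add_of_le_min_of_le_max hg (h.completion_left_le hp) h.completion_right_le

lemma jobSlots_left_ne (h : IsExchange S S' j k) {t t' : ℕ} (ht : S.assign t = some j)
    (ht' : S.assign t' = some k) (hle : t' ≤ t) : jobSlots S' j ≠ jobSlots S j := by
  intro heq
  have htj : t ∈ jobSlots S' j := heq ▸ mem_jobSlots.2 ht
  have htk : t' ∈ jobSlots S' k := by
    have hU : t' ∈ jobSlots S' j ∪ jobSlots S' k :=
      h.union_eq ▸ mem_union_right _ (mem_jobSlots.2 ht')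
    refine (mem_union.1 hU).elim (fun htj' => ?_) id
    obtain rfl : k = j := by
      rwa [heq, mem_jobSlots, ht', Option.some.injEq] at htj'
    exact htj'
  exact (h.lt t htj t' htk).not_ge hle

lemma sptPotential_lt (h : IsExchange S S' j k) (hp : p j < p k)
    (hne : jobSlots S' j ≠ jobSlots S j) : sptPotential S < sptPotential S' := by
  have hjk : j ≠ k := ne_of_apply_ne p hp.ne
  have hother : ∑ i ∈ {j, k}ᶜ, p i * ∑ t ∈ jobSlots S' i, t
      = ∑ i ∈ {j, k}ᶜ, p i * ∑ t ∈ jobSlots S i, t :=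
    sum_congr rfl fun i hi => by rw [h.jobSlots_eq i hi]
  have hsum : ∑ t ∈ jobSlots S' j, t + ∑ t ∈ jobSlots S' k, t
      = ∑ t ∈ jobSlots S j, t + ∑ t ∈ jobSlots S k, t := by
    rw [← sum_union (pairwise_disjoint_jobSlots S' hjk), h.union_eq,
      sum_union (pairwise_disjoint_jobSlots S hjk)]
  have hlt : ∑ t ∈ jobSlots S' j, t < ∑ t ∈ jobSlots S j, t :=
    sum_lt_sum_of_subset_union_of_forall_lt strictMono_id h.lt
      (h.union_eq ▸ subset_union_left) (by rw [card_jobSlots, card_jobSlots]) hne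
  have hpair : p j * ∑ t ∈ jobSlots S j, t + p k * ∑ t ∈ jobSlots S k, t
      < p j * ∑ t ∈ jobSlots S' j, t + p k * ∑ t ∈ jobSlots S' k, t := by
    nlinarith only [hp, hlt, hsum]
  unfold sptPotential
  rw [sum_univ_eq_add_add_sum_compl_pair hjk, ← hother,
    sum_univ_eq_add_add_sum_compl_pair hjk fun i => p i * ∑ t ∈ jobSlots S' i, t]
  exact Nat.add_lt_add_right hpair _

end IsExchange

theorem spt_optimal_general {M : Type*} [AddCommMonoid M] [LinearOrder M] [IsOrderedAddMonoid M]
    (hD : ∑ j, p j ≤ D) {g : ℕ → M} (hg : Monotone g) (c : Finset ℕ → M) :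
    ∃ S' : Schedule n p D,
      (∀ S : Schedule n p D, totalCost g c S' ≤ totalCost g c S) ∧ IsSPT S' := by
  have := nonempty_schedule hD
  obtain ⟨S, hS⟩ := Finite.exists_min fun S : Schedule n p D =>
    toLex (totalCost g c S, OrderDual.toDual (sptPotential S))
  simp only [Prod.Lex.toLex_le_toLex, OrderDual.toDual_le_toDual] at hS
  refine ⟨S, fun R => (hS R).elim le_of_lt fun h => h.1.le, fun j k hp t t' ht ht' => ?_⟩
  by_contra! hle
  have hjk : j ≠ k := ne_of_apply_ne p hp.ne
  obtain ⟨S', hS'⟩ := exists_isExchange S hjk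
  have hcost := hS'.totalCost_le hjk hp.le hg c
  have hpot := hS'.sptPotential_lt hp (hS'.jobSlots_left_ne ht ht' hle)
  rcases hS S' with hlt | ⟨-, hpot_le⟩
  · exact hlt.not_ge hcost
  · exact hpot.not_ge hpot_le

/-- There is a minimum-cost schedule (for total completion time plus utilization cost)
that processes jobs in SPT order. -/
theorem spt_optimal (n : ℕ) (p : Fin n → ℕ) (hp : ∀ j, 1 ≤ p j)
    (e : ℕ → ℚ) (he : ∀ t, 0 ≤ e t) (D : ℕ) (hD : ∑ j, p j ≤ D) :
    ∃ S' : Schedule n p D,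
      (∀ S : Schedule n p D,
        (∑ j : Fin n, (completion S' j : ℚ)) + ucost e S'
          ≤ (∑ j : Fin n, (completion S j : ℚ)) + ucost e S) ∧
      (∀ j k : Fin n, p j < p k → ∀ t t',
        S'.assign t = some j → S'.assign t' = some k → t < t') :=
  spt_optimal_general hD Nat.mono_cast fun U => ∑ t ∈ U, e t
end

section
/- There exists a schedule S* attaining the minimum of cost(S) = ∑_j w_j·C_j(S) + E(S) over all schedules such that within each constant-tariff interval the utilized slots form a prefix: for every k ∈ {1,…,K} and all t, t' ∈ I_k with t' < t, if slot t is utilized by S* then slot t' is utilized by S*. -/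
open Finset

variable {n D : ℕ} {p : Fin n → ℕ}

/-- The weighted total cost: `∑_j w_j C_j(S) + E(S)`. -/
def wcost (w : Fin n → ℚ) (e : ℕ → ℚ) (S : Schedule n p D) : ℚ :=
  (∑ j : Fin n, w j * (completion S j : ℚ)) + ucost e S

/-- `S` processes jobs in the order of their indices: every slot of a smaller-indexed
job precedes every slot of a larger-indexed job. -/
def RespectsOrder (S : Schedule n p D) : Prop :=
  ∀ j k : Fin n, j < k → ∀ t t', S.assign t = some j → S.assign t' = some k → t < t'

/-- The tie-breaking value `∑_{t utilized} t`. -/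
def tieVal (S : Schedule n p D) : ℕ :=
  ∑ t ∈ (Finset.range D).filter (fun t => S.assign t ≠ none), t

/-- Membership in the set `P = (⋃_k {s_k, s_k+1}) ∪ {D}` of potential split points,
for boundaries `σ : Fin (K+1) → ℕ` (0-based: interval `k` is `[σ k.castSucc, σ k.succ)`). -/
def inP (K : ℕ) (σ : Fin (K+1) → ℕ) (D t : ℕ) : Prop :=
  (∃ k : Fin K, t = σ k.castSucc ∨ t = σ k.castSucc + 1) ∨ t = D

/-- `t` is a split point of `S`: `t ∈ P` and every job starting before `t` completes by `t`. -/
def IsSplit (K : ℕ) (σ : Fin (K+1) → ℕ) (S : Schedule n p D) (t : ℕ) : Prop :=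
  inP K σ D t ∧ ∀ j : Fin n, startTime S j < t ↔ completion S j ≤ t

/-- `e_max^j`: the maximum tariff among the slots assigned to job `j`. -/
def emax (e : ℕ → ℚ) (S : Schedule n p D) (j : Fin n) : ℚ :=
  WithBot.unbotD 0 (((jobSlots S j).image e).max)

/-- The quantity `e_max^j + ∑_{j' < j} w_{j'}` whose maximum over a region defines `Δ_x`. -/
def dval (w : Fin n → ℚ) (e : ℕ → ℚ) (S : Schedule n p D) (j : Fin n) : ℚ :=
  emax e S j + ∑ j' ∈ Finset.univ.filter (fun j' => j' < j), w j'

/-!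
Among the minimum-cost schedules take one minimizing the tie-breaking value, the sum of the utilized
slots. If a slot `t` were utilized while some earlier slot `t'` with `e t' ≤ e t` were idle, moving
the work of `t` to `t'` would delay no job, would not increase the utilization cost, and would
lower the tie-breaking value. Within an interval of constant tariff this excludes every gap.
-/

theorem apply_swap_le_of_ne {α β : Type*} [DecidableEq α] [Preorder β] {g : α → β} {a b s : α}
    (hg : g a ≤ g b) (hs : s ≠ a) : g (Equiv.swap a b s) ≤ g s := by
  obtain rfl | hsb := eq_or_ne s b
  · rwa [Equiv.swap_apply_right]
  · rw [Equiv.swap_apply_of_ne_of_ne hs hsb]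

namespace Schedule

@[ext]
theorem ext {S T : Schedule n p D} (h : ∀ t, S.assign t = T.assign t) : S = T := by
  cases S
  cases T
  congr
  exact funext h

theorem lt_of_assign_ne_none (S : Schedule n p D) {t : ℕ} (ht : S.assign t ≠ none) : t < D :=
  not_le.mp fun h => ht (S.beyond t h)

theorem mem_jobSlots {S : Schedule n p D} {j : Fin n} {t : ℕ} :
    t ∈ jobSlots S j ↔ S.assign t = some j := by
  refine mem_filter.trans (and_iff_right_of_imp fun h => ?_)
  exact mem_range.mpr (S.lt_of_assign_ne_none (by simp [h]))

/-- The set of utilized slots of a schedule, over which `ucost` and `tieVal` are sums. -/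
def utilized (S : Schedule n p D) : Finset ℕ :=
  {t ∈ range D | S.assign t ≠ none}

theorem mem_utilized {S : Schedule n p D} {t : ℕ} : t ∈ S.utilized ↔ S.assign t ≠ none := by
  refine mem_filter.trans (and_iff_right_of_imp fun h => ?_)
  exact mem_range.mpr (S.lt_of_assign_ne_none h)

theorem jobSlots_subset_utilized (S : Schedule n p D) (j : Fin n) :
    jobSlots S j ⊆ S.utilized := fun t ht => by
  simp [mem_utilized, mem_jobSlots.mp ht]

instance : Finite (Schedule n p D) := by
  refine Finite.of_injective (fun S (t : Fin D) => S.assign t) fun S T h => ext fun t => ?_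
  rcases lt_or_ge t D with ht | ht
  · exact congrFun h ⟨t, ht⟩
  · rw [S.beyond t ht, T.beyond t ht]

theorem nonempty_of_sum_le (hD : ∑ j, p j ≤ D) : Nonempty (Schedule n p D) := by
  classical
  -- An injection of the units of work `(j, i)` with `i < p j` into the slots is a schedule.
  obtain ⟨φ⟩ : Nonempty ((Σ j, Fin (p j)) ↪ Fin D) :=
    Function.Embedding.nonempty_of_card_le (by simpa using hD)
  let slot : (Σ j, Fin (p j)) ↪ ℕ := φ.trans Fin.valEmbedding
  have slot_iff (x t) : Function.partialInv slot t = some x ↔ slot x = t :=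
    slot.injective.isPartialInv x t
  have assign_iff (t j) :
      (Function.partialInv slot t).map Sigma.fst = some j ↔ ∃ i, slot ⟨j, i⟩ = t := by
    simp only [Option.map_eq_some_iff, slot_iff, Sigma.exists, exists_and_right, exists_eq_right]
  refine ⟨fun t => (Function.partialInv slot t).map Sigma.fst, fun j => ?_, fun t ht => ?_⟩
  · have slots_eq : {t ∈ range D | (Function.partialInv slot t).map Sigma.fst = some j} =
        univ.map ((Function.Embedding.sigmaMk j).trans slot) := by
      ext t
      simp only [mem_filter, mem_range, assign_iff, mem_map, mem_univ, true_and,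
        Function.Embedding.trans_apply, Function.Embedding.sigmaMk_apply]
      exact and_iff_right_of_imp fun ⟨i, hi⟩ => hi ▸ (φ ⟨j, i⟩).isLt
    rw [slots_eq, card_map, card_univ, Fintype.card_fin]
  · refine Option.eq_none_iff_forall_ne_some.mpr fun j hj => ?_
    obtain ⟨i, hi⟩ := (assign_iff t j).mp hj
    exact ht.not_gt (hi ▸ (φ ⟨j, i⟩).isLt)

/-- The schedule obtained by moving the content of every slot `t` to the slot `f t`. Only the
utilized slots have to stay below the horizon. -/
def permute (S : Schedule n p D) (f : Equiv.Perm ℕ) (hf : ∀ t ∈ S.utilized, f t < D) :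
    Schedule n p D where
  assign t := S.assign (f.symm t)
  card_slots j := by
    refine (card_equiv f fun t => ?_).symm.trans (S.card_slots j)
    change t ∈ jobSlots S j ↔ _
    rw [mem_filter, mem_range, Equiv.symm_apply_apply, mem_jobSlots]
    exact (and_iff_right_of_imp fun h => hf t (mem_utilized.mpr (by simp [h]))).symm
  beyond t ht := by
    by_contra h
    exact ht.not_gt (by simpa using hf _ (mem_utilized.mpr h))

section permute

variable {S : Schedule n p D} {f : Equiv.Perm ℕ} {hf : ∀ t ∈ S.utilized, f t < D}

theorem jobSlots_permute (j : Fin n) :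
    jobSlots (S.permute f hf) j = (jobSlots S j).map f.toEmbedding := by
  ext t
  simp only [mem_map_equiv, mem_jobSlots, permute]

theorem utilized_permute : (S.permute f hf).utilized = S.utilized.map f.toEmbedding := by
  ext t
  simp only [mem_map_equiv, mem_utilized, permute]

theorem sum_utilized_permute {M : Type*} [AddCommMonoid M] (g : ℕ → M) :
    ∑ t ∈ (S.permute f hf).utilized, g t = ∑ t ∈ S.utilized, g (f t) := by
  simp only [utilized_permute, sum_map, Equiv.coe_toEmbedding]

theorem completion_permute_le (j : Fin n) (hle : ∀ t ∈ jobSlots S j, f t ≤ t) :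
    completion (S.permute f hf) j ≤ completion S j := by
  rw [completion, completion, jobSlots_permute, sup_map]
  exact Nat.succ_le_succ (sup_mono_fun hle)

theorem ucost_permute_le {e : ℕ → ℚ} (he : ∀ t ∈ S.utilized, e (f t) ≤ e t) :
    ucost e (S.permute f hf) ≤ ucost e S :=
  (sum_utilized_permute e).trans_le (sum_le_sum he)

theorem wcost_permute_le {w : Fin n → ℚ} (hw : ∀ j, 0 ≤ w j) {e : ℕ → ℚ}
    (hle : ∀ t ∈ S.utilized, f t ≤ t) (he : ∀ t ∈ S.utilized, e (f t) ≤ e t) :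
    wcost w e (S.permute f hf) ≤ wcost w e S := by
  refine add_le_add (sum_le_sum fun j _ => ?_) (ucost_permute_le he)
  refine mul_le_mul_of_nonneg_left (Nat.cast_le.mpr ?_) (hw j)
  exact completion_permute_le j fun t ht => hle t (S.jobSlots_subset_utilized j ht)

theorem tieVal_permute_lt (hle : ∀ t ∈ S.utilized, f t ≤ t) (hlt : ∃ t ∈ S.utilized, f t < t) :
    tieVal (S.permute f hf) < tieVal S :=
  (sum_utilized_permute id).trans_lt (sum_lt_sum hle hlt)

end permute

theorem exists_wcost_tieVal_minimal (w : Fin n → ℚ) (e : ℕ → ℚ) (hD : ∑ j, p j ≤ D) :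
    ∃ S : Schedule n p D, (∀ T : Schedule n p D, wcost w e S ≤ wcost w e T) ∧
      ∀ T : Schedule n p D, wcost w e T ≤ wcost w e S → tieVal S ≤ tieVal T := by
  have := nonempty_of_sum_le hD
  obtain ⟨S, hS⟩ := Finite.exists_min fun S : Schedule n p D => toLex (wcost w e S, tieVal S)
  simp only [Prod.Lex.toLex_le_toLex'] at hS
  exact ⟨S, fun T => (hS T).1, fun T hT => (hS T).2 (le_antisymm (hS T).1 hT)⟩

theorem exists_wcost_le_tieVal_lt_of_idle {w : Fin n → ℚ} (hw : ∀ j, 0 ≤ w j) {e : ℕ → ℚ}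
    (S : Schedule n p D) {t t' : ℕ} (hlt : t' < t) (he : e t' ≤ e t)
    (ht : S.assign t ≠ none) (ht' : S.assign t' = none) :
    ∃ T : Schedule n p D, wcost w e T ≤ wcost w e S ∧ tieVal T < tieVal S := by
  have hne : ∀ s ∈ S.utilized, s ≠ t' := fun s hs h => mem_utilized.mp hs (h ▸ ht')
  have hle : ∀ s ∈ S.utilized, Equiv.swap t' t s ≤ s := fun s hs =>
    apply_swap_le_of_ne (g := id) hlt.le (hne s hs)
  have hf : ∀ s ∈ S.utilized, Equiv.swap t' t s < D := fun s hs =>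
    (hle s hs).trans_lt (S.lt_of_assign_ne_none (mem_utilized.mp hs))
  refine ⟨S.permute _ hf,
    wcost_permute_le hw hle fun s hs => apply_swap_le_of_ne he (hne s hs),
    tieVal_permute_lt hle ⟨t, mem_utilized.mpr ht, ?_⟩⟩
  rwa [Equiv.swap_apply_right]

end Schedule

theorem prefix_utilization_optimal_general {w : Fin n → ℚ} (hw : ∀ j, 0 ≤ w j) (e : ℕ → ℚ)
    (hD : ∑ j, p j ≤ D) :
    ∃ S : Schedule n p D, (∀ T : Schedule n p D, wcost w e S ≤ wcost w e T) ∧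
      ∀ t t' : ℕ, t' < t → e t' ≤ e t → S.assign t ≠ none → S.assign t' ≠ none := by
  obtain ⟨S, hmin, htie⟩ := Schedule.exists_wcost_tieVal_minimal w e hD
  refine ⟨S, hmin, fun t t' hlt he ht ht' => ?_⟩
  obtain ⟨T, hcost, hT⟩ := S.exists_wcost_le_tieVal_lt_of_idle hw hlt he ht ht'
  exact hT.not_ge (htie T hcost)

/-- There is a minimum-cost schedule (weighted completion times plus utilization cost)
whose utilized slots form a prefix within every constant-tariff interval. -/
theorem prefix_utilization_optimal (n : ℕ) (p : Fin n → ℕ) (hp : ∀ j, 1 ≤ p j)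
    (w : Fin n → ℚ) (hw : ∀ j, 0 ≤ w j)
    (e : ℕ → ℚ) (he : ∀ t, 0 ≤ e t) (D : ℕ) (hD : ∑ j, p j ≤ D)
    (K : ℕ) (σ : Fin (K+1) → ℕ) (hσ0 : σ 0 = 0) (hσD : σ (Fin.last K) = D)
    (hmono : StrictMono σ) (ec : Fin K → ℚ)
    (hconst : ∀ k : Fin K, ∀ t, σ k.castSucc ≤ t → t < σ k.succ → e t = ec k) :
    ∃ S' : Schedule n p D,
      (∀ S : Schedule n p D, wcost w e S' ≤ wcost w e S) ∧
      (∀ k : Fin K, ∀ t t' : ℕ, σ k.castSucc ≤ t' → t' < t → t < σ k.succ →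
        S'.assign t ≠ none → S'.assign t' ≠ none) := by
  obtain ⟨S, hmin, hpre⟩ := prefix_utilization_optimal_general hw e hD
  refine ⟨S, hmin, fun k t t' hk hlt ht => hpre t t' hlt (Eq.le ?_)⟩
  rw [hconst k t' hk (hlt.trans ht), hconst k t (hk.trans hlt.le) ht]
end

section
/- Consider the single-machine makespan problem with utilization cost: the total cost of a schedule S is Cmax(S) + E(S), where Cmax(S) = max_j C_j(S). Let P = ∑_j p_j. Then there exists a schedule S* of minimum total cost whose set U of utilized slots is a minimum-tariff P-element subset of [0, Cmax(S*)): |U| = P, max U = Cmax(S*) − 1, and for every P-element subset U' of {0, 1, …, Cmax(S*) − 1} one has ∑_{t ∈ U} e(t) ≤ ∑_{t ∈ U'} e(t). -/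
open Finset

variable {n D : ℕ} {p : Fin n → ℕ}

/-!
A schedule can be given any `P`-element set of slots below the horizon, and its makespan is the
least `m` such that `[0, m)` contains all its slots. Hence, inside `[0, Cmax)`, the slots of an
optimal schedule may be exchanged for any other `P` slots without increasing the makespan, so by
optimality no such exchange lowers the tariff.
-/

lemma exists_card_fiber_eq {α ι : Type*} [Fintype α] [Fintype ι] [DecidableEq ι] {k : ι → ℕ}
    (h : Fintype.card α = ∑ i, k i) : ∃ f : α → ι, ∀ i, #{a | f a = i} = k i := by
  have φ : α ≃ Σ i, Fin (k i) := Fintype.equivOfCardEq (by simpa using h)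
  refine ⟨fun a => (φ a).1, fun i => ?_⟩
  have fiberEquiv : {a // (φ a).1 = i} ≃ Fin (k i) :=
    (φ.subtypeEquiv fun _ => Iff.rfl).trans (Equiv.sigmaSubtype i)
  rw [← Fintype.card_subtype, Fintype.card_congr fiberEquiv, Fintype.card_fin]

namespace Schedule

/-- The set `U` of utilized slots of a schedule. -/
def utilizedSlots (S : Schedule n p D) : Finset ℕ :=
  {t ∈ range D | S.assign t ≠ none}

/-- The makespan `Cmax` of a schedule; without any jobs it is `0`. -/
def makespan (S : Schedule n p D) : ℕ :=
  univ.sup fun j => completion S j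

/-- The objective `Cmax + E` of the makespan problem with utilization cost. -/
def totalCost (e : ℕ → ℚ) (S : Schedule n p D) : ℚ :=
  S.makespan + ucost e S

/-- Optimality among all schedules of the same jobs within the same horizon. -/
def IsOptimal (e : ℕ → ℚ) (S : Schedule n p D) : Prop :=
  ∀ T : Schedule n p D, totalCost e S ≤ totalCost e T

lemma utilizedSlots_eq_biUnion_jobSlots (S : Schedule n p D) :
    S.utilizedSlots = univ.biUnion (jobSlots S) := by
  ext t
  simp [utilizedSlots, jobSlots, Option.ne_none_iff_exists']

lemma pairwiseDisjoint_jobSlots (S : Schedule n p D) (s : Set (Fin n)) :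
    s.PairwiseDisjoint (jobSlots S) := by
  intro i _ j _ hij
  refine disjoint_filter.2 fun t _ hi hj => hij ?_
  exact Option.some.inj (hi.symm.trans hj)

lemma card_utilizedSlots (S : Schedule n p D) : #S.utilizedSlots = ∑ j, p j := by
  rw [utilizedSlots_eq_biUnion_jobSlots, card_biUnion (S.pairwiseDisjoint_jobSlots _)]
  exact sum_congr rfl fun j _ => S.card_slots j

lemma utilizedSlots_nonempty (hn : 0 < n) (hp : ∀ j, 1 ≤ p j) (S : Schedule n p D) :
    S.utilizedSlots.Nonempty := by
  rw [← card_pos, card_utilizedSlots]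
  exact sum_pos (fun j _ => hp j) ⟨⟨0, hn⟩, mem_univ _⟩

lemma completion_le_iff {S : Schedule n p D} {j : Fin n} (hj : 1 ≤ p j) {m : ℕ} :
    completion S j ≤ m ↔ jobSlots S j ⊆ range m := by
  have hne : (jobSlots S j).Nonempty := card_pos.1 (hj.trans_eq (S.card_slots j).symm)
  obtain ⟨last, hlast, hsup⟩ := exists_mem_eq_sup _ hne id
  constructor
  · intro h t ht
    exact mem_range.2 ((le_sup (f := id) ht).trans_lt h)
  · intro h
    rw [completion, hsup]
    exact mem_range.1 (h hlast)

lemma makespan_le_iff (hp : ∀ j, 1 ≤ p j) {S : Schedule n p D} {m : ℕ} :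
    S.makespan ≤ m ↔ S.utilizedSlots ⊆ range m := by
  simp only [makespan, Finset.sup_le_iff, completion_le_iff (hp _),
    utilizedSlots_eq_biUnion_jobSlots, biUnion_subset]

lemma makespan_le_horizon (hp : ∀ j, 1 ≤ p j) (S : Schedule n p D) : S.makespan ≤ D :=
  (makespan_le_iff hp).2 (filter_subset _ _)

lemma max_utilizedSlots (hn : 0 < n) (hp : ∀ j, 1 ≤ p j) (S : Schedule n p D) :
    S.utilizedSlots.max = (S.makespan - 1 : ℕ) := by
  have lt_makespan : ∀ t ∈ S.utilizedSlots, t < S.makespan := fun t ht =>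
    mem_range.1 ((makespan_le_iff hp).1 le_rfl ht)
  obtain ⟨u, hu⟩ := S.utilizedSlots_nonempty hn hp
  have not_subset : ¬ S.utilizedSlots ⊆ range (S.makespan - 1) := by
    rw [← makespan_le_iff hp]
    have := lt_makespan u hu
    omega
  obtain ⟨t, ht, hlast⟩ := Finset.not_subset.1 not_subset
  have t_eq : t = S.makespan - 1 := by
    have := lt_makespan t ht
    rw [mem_range] at hlast
    omega
  refine le_antisymm (Finset.max_le fun s hs => ?_) (t_eq ▸ le_max ht)
  exact WithBot.coe_le_coe.2 (Nat.le_sub_one_of_lt (lt_makespan s hs))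

lemma exists_utilizedSlots_eq {U : Finset ℕ} (hU : U ⊆ range D) (hcard : #U = ∑ j, p j) :
    ∃ S : Schedule n p D, S.utilizedSlots = U := by
  obtain ⟨f, hf⟩ := exists_card_fiber_eq (α := U) ((Fintype.card_coe U).trans hcard)
  let assign (t : ℕ) : Option (Fin n) := if h : t ∈ U then some (f ⟨t, h⟩) else none
  have slots_eq (j : Fin n) : {t ∈ range D | assign t = some j} =
      ({a | f a = j} : Finset U).map (Function.Embedding.subtype _) := by
    ext t
    simpa [assign] using fun ht _ => mem_range.1 (hU ht)
  refine ⟨⟨assign, fun j => ?_, fun t ht => ?_⟩, ?_⟩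
  · rw [slots_eq, card_map, hf]
  · exact dif_neg fun h => ht.not_gt (mem_range.1 (hU h))
  · ext t
    simpa [utilizedSlots, assign] using fun ht => mem_range.1 (hU ht)

instance inst_s12 : Finite (Schedule n p D) := by
  refine Finite.of_injective (fun S (t : Fin D) => S.assign t) ?_
  rintro ⟨f, _, hf⟩ ⟨g, _, hg⟩ h
  rw [mk.injEq]
  funext t
  rcases lt_or_ge t D with ht | ht
  · exact congrFun h ⟨t, ht⟩
  · rw [hf t ht, hg t ht]

lemma exists_isOptimal (e : ℕ → ℚ) (hD : ∑ j, p j ≤ D) : ∃ S : Schedule n p D, S.IsOptimal e := by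
  obtain ⟨S, -⟩ := exists_utilizedSlots_eq (range_subset_range.2 hD) (card_range (∑ j, p j))
  have : Nonempty (Schedule n p D) := ⟨S⟩
  exact Finite.exists_min (totalCost e)

lemma IsOptimal.ucost_le_sum {e : ℕ → ℚ} {S : Schedule n p D} (hS : S.IsOptimal e)
    (hp : ∀ j, 1 ≤ p j) {U : Finset ℕ} (hU : U ⊆ range S.makespan) (hcard : #U = ∑ j, p j) :
    ucost e S ≤ ∑ t ∈ U, e t := by
  have hUD : U ⊆ range D := hU.trans (range_subset_range.2 (S.makespan_le_horizon hp))
  obtain ⟨T, rfl⟩ := exists_utilizedSlots_eq hUD hcard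
  have makespan_le : (T.makespan : ℚ) ≤ S.makespan := by
    exact_mod_cast (makespan_le_iff hp).2 hU
  have cost_le : S.makespan + ucost e S ≤ T.makespan + ucost e T := hS T
  change ucost e S ≤ ucost e T
  linarith

end Schedule

theorem makespan_optimal_cheapest_slots_general (hn : 0 < n) (hp : ∀ j, 1 ≤ p j) (e : ℕ → ℚ)
    (hD : ∑ j, p j ≤ D) :
    (∃ S : Schedule n p D, S.IsOptimal e) ∧
      ∀ S : Schedule n p D, S.IsOptimal e →
        #S.utilizedSlots = ∑ j, p j ∧
        S.utilizedSlots.max = (S.makespan - 1 : ℕ) ∧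
        ∀ U ⊆ range S.makespan, #U = ∑ j, p j →
          ∑ t ∈ S.utilizedSlots, e t ≤ ∑ t ∈ U, e t :=
  ⟨Schedule.exists_isOptimal e hD, fun S hS =>
    ⟨S.card_utilizedSlots, S.max_utilizedSlots hn hp, fun _ hU hcard =>
      hS.ucost_le_sum hp hU hcard⟩⟩

/-- For makespan plus utilization cost on a single machine, some optimal schedule
utilizes exactly a minimum-tariff `P`-element subset of `[0, Cmax)` whose maximum
element is `Cmax − 1`, where `P = ∑_j p_j`. -/
theorem makespan_optimal_cheapest_slots (n : ℕ) (hn : 0 < n)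
    (p : Fin n → ℕ) (hp : ∀ j, 1 ≤ p j)
    (e : ℕ → ℚ) (he : ∀ t, 0 ≤ e t) (D : ℕ) (hD : ∑ j, p j ≤ D) :
    ∃ S' : Schedule n p D,
      (∀ S : Schedule n p D,
        ((Finset.univ.sup fun j => completion S' j : ℕ) : ℚ) + ucost e S'
          ≤ ((Finset.univ.sup fun j => completion S j : ℕ) : ℚ) + ucost e S) ∧
      (((Finset.range D).filter (fun t => S'.assign t ≠ none)).card = ∑ j, p j) ∧
      (((Finset.range D).filter (fun t => S'.assign t ≠ none)).max =
        (((Finset.univ.sup fun j => completion S' j) - 1 : ℕ) : WithBot ℕ)) ∧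
      (∀ U' : Finset ℕ,
        U' ⊆ Finset.range (Finset.univ.sup fun j => completion S' j) →
        U'.card = ∑ j, p j →
        ∑ t ∈ (Finset.range D).filter (fun t => S'.assign t ≠ none), e t
          ≤ ∑ t ∈ U', e t) := by
  obtain ⟨⟨S, hS⟩, slots_of_optimal⟩ := makespan_optimal_cheapest_slots_general hn hp e hD
  exact ⟨S, hS, slots_of_optimal S hS⟩
end
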